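/- Let V be a regular vertex operator algebra and W an ordinary V-module. Then D(W) = W′. -/

import Mathlib

noncomputable section

/-- The generalized binomial coefficient `C(m, i)` for `m ∈ ℤ`, `i ∈ ℕ`,
as a complex number: `m(m-1)⋯(m-i+1)/i!`. -/
def cchoose (m : ℤ) (i : ℕ) : ℂ :=
  (∏ j ∈ Finset.range i, ((m : ℂ) - (j : ℂ))) / (Nat.factorial i : ℂ)

/-- A vertex operator algebra `V = ⊕ₙ V₍ₙ₎` over `ℂ`.  The vertex operator map is
recorded through its modes `op u n v = uₙ v` (so `Y(u,x)v = Σₙ uₙv x^{-n-1}`), with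
vacuum `one`, conformal vector `omega` (with `L(k) = ω_{k+1}`), central charge `cc`,
weight grading `wtSpace` with projections `proj`.  The Jacobi identity is recorded in
the equivalent form of the Borcherds identity on modes. -/
structure VOA where
  carrier : Type
  [grp : AddCommGroup carrier]
  [mdl : Module ℂ carrier]
  op : carrier → ℤ → carrier → carrier
  one : carrier
  omega : carrier
  wtSpace : ℤ → Submodule ℂ carrier
  proj : ℤ → carrier → carrier
  cc : ℂ
  op_linear_left : ∀ (n : ℤ) (w : carrier), IsLinearMap ℂ fun u => op u n w
  op_linear_right : ∀ (u : carrier) (n : ℤ), IsLinearMap ℂ (op u n)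
  trunc : ∀ u v : carrier, ∃ N : ℤ, ∀ n : ℤ, N ≤ n → op u n v = 0
  one_op : ∀ (n : ℤ) (v : carrier), op one n v = if n = -1 then v else 0
  create_nonneg : ∀ (v : carrier) (n : ℤ), 0 ≤ n → op v n one = 0
  create : ∀ v : carrier, op v (-1) one = v
  borcherds : ∀ (u v w : carrier) (l m n : ℤ),
    (∑ᶠ i : ℕ, cchoose m i • op (op u (l + (i : ℤ)) v) (m + n - (i : ℤ)) w)
      = ∑ᶠ i : ℕ, ((-1 : ℂ) ^ i * cchoose l i) •
          (op u (l + m - (i : ℤ)) (op v (n + (i : ℤ)) w)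
            - ((-1 : ℂ) ^ l) • op v (l + n - (i : ℤ)) (op u (m + (i : ℤ)) w))
  proj_linear : ∀ n : ℤ, IsLinearMap ℂ (proj n)
  proj_mem : ∀ (n : ℤ) (v : carrier), proj n v ∈ wtSpace n
  proj_eq : ∀ n : ℤ, ∀ v ∈ wtSpace n, proj n v = v
  proj_ne : ∀ m n : ℤ, m ≠ n → ∀ v ∈ wtSpace m, proj n v = 0
  proj_finite : ∀ v : carrier, (Function.support fun n => proj n v).Finite
  proj_sum : ∀ v : carrier, (∑ᶠ n : ℤ, proj n v) = v
  fd : ∀ n : ℤ, FiniteDimensional ℂ (wtSpace n)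
  lower_trunc : ∃ N : ℤ, ∀ n : ℤ, n < N → wtSpace n = ⊥
  one_wt : one ∈ wtSpace 0
  omega_wt : omega ∈ wtSpace 2
  op_wt : ∀ k m n : ℤ, ∀ u ∈ wtSpace k, ∀ v ∈ wtSpace m, op u n v ∈ wtSpace (k + m - n - 1)
  L_zero : ∀ n : ℤ, ∀ v ∈ wtSpace n, op omega 1 v = (n : ℂ) • v
  L_neg_one : ∀ (u : carrier) (n : ℤ) (w : carrier),
    op (op omega 0 u) n w = (-(n : ℂ)) • op u (n - 1) w
  virasoro : ∀ (m n : ℤ) (v : carrier),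
    op omega (m + 1) (op omega (n + 1) v) - op omega (n + 1) (op omega (m + 1) v)
      = ((m : ℂ) - (n : ℂ)) • op omega (m + n + 1) v
        + (if m + n = 0 then (((m : ℂ) ^ 3 - (m : ℂ)) / 12) * cc else 0) • v

attribute [instance] VOA.grp VOA.mdl

namespace VOA

variable (V : VOA)

/-- The Virasoro operator `L(k) = ω_{k+1}`. -/
def L (k : ℤ) (v : V.carrier) : V.carrier := V.op V.omega (k + 1) v

/-- The positive-weight part `V₊ = ⊕_{n ≥ 1} V₍ₙ₎`. -/
def pos : Submodule ℂ V.carrier := ⨆ (n : ℤ) (_ : 1 ≤ n), V.wtSpace n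

/-- Zhu's subspace `C₂(V) = span{u₋₂v : u, v ∈ V}`. -/
def C2 : Submodule ℂ V.carrier :=
  Submodule.span ℂ {x : V.carrier | ∃ u v : V.carrier, x = V.op u (-2) v}

/-- The subspace `C₁(V) = span(v₋₁V₊ (v ∈ V₊) together with L(-1)V)`. -/
def C1 : Submodule ℂ V.carrier :=
  Submodule.span ℂ
    ({x : V.carrier | ∃ u ∈ V.pos, ∃ v ∈ V.pos, x = V.op u (-1) v}
      ∪ {x : V.carrier | ∃ v : V.carrier, x = V.op V.omega 0 v})

/-- Iterated application of modes: `iterApply [(u¹,n₁),…,(uʳ,n_r)] w = u¹_{n₁} ⋯ uʳ_{n_r} w`. -/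
def iterApply : List (V.carrier × ℤ) → V.carrier → V.carrier
  | [], w => w
  | p :: l, w => V.op p.1 p.2 (iterApply l w)

/-- `U ⊆ V` generates `V` as a vertex operator algebra:  `V` is linearly spanned by
the elements `u¹_{n₁} ⋯ uʳ_{n_r} 1` with `uⁱ ∈ U`, `n_i ∈ ℤ`. -/
def generates (U : Set V.carrier) : Prop :=
  Submodule.span ℂ {x : V.carrier | ∃ l : List (V.carrier × ℤ),
    (∀ p ∈ l, p.1 ∈ U) ∧ x = V.iterApply l V.one} = ⊤

/-- `V` is finitely generated as a vertex operator algebra. -/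
def FinitelyGenerated : Prop := ∃ S : Finset V.carrier, V.generates ↑S

end VOA

/-- A weak `V`-module: all axioms of a module (truncation, vacuum, Jacobi identity in
Borcherds form) except those involving gradings. -/
structure WeakModule (V : VOA) where
  carrier : Type
  [grp : AddCommGroup carrier]
  [mdl : Module ℂ carrier]
  op : V.carrier → ℤ → carrier → carrier
  op_linear_left : ∀ (n : ℤ) (w : carrier), IsLinearMap ℂ fun u => op u n w
  op_linear_right : ∀ (u : V.carrier) (n : ℤ), IsLinearMap ℂ (op u n)
  trunc : ∀ (u : V.carrier) (w : carrier), ∃ N : ℤ, ∀ n : ℤ, N ≤ n → op u n w = 0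
  one_op : ∀ (n : ℤ) (w : carrier), op V.one n w = if n = -1 then w else 0
  borcherds : ∀ (u v : V.carrier) (w : carrier) (l m n : ℤ),
    (∑ᶠ i : ℕ, cchoose m i • op (V.op u (l + (i : ℤ)) v) (m + n - (i : ℤ)) w)
      = ∑ᶠ i : ℕ, ((-1 : ℂ) ^ i * cchoose l i) •
          (op u (l + m - (i : ℤ)) (op v (n + (i : ℤ)) w)
            - ((-1 : ℂ) ^ l) • op v (l + n - (i : ℤ)) (op u (m + (i : ℤ)) w))

attribute [instance] WeakModule.grp WeakModule.mdl

namespace WeakModule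

variable {V : VOA} (W : WeakModule V)

/-- `L(0)` acting on a weak module, as a linear map. -/
def L0 : W.carrier →ₗ[ℂ] W.carrier := IsLinearMap.mk' _ (W.op_linear_right V.omega 1)

/-- The `L(0)`-eigenspace of eigenvalue `h`. -/
def eig (h : ℂ) : Submodule ℂ W.carrier :=
  LinearMap.ker (W.L0 - h • (LinearMap.id : W.carrier →ₗ[ℂ] W.carrier))

/-- The coefficient `v*ₙ` of the adjoint vertex operator
`⟨Y*(v,x)α, w⟩ = ⟨α, Y(e^{xL(1)}(-x^{-2})^{L(0)}v, x^{-1})w⟩` acting on the full dual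
space: for `v` homogeneous of weight `h`,
`(v*ₙ α)(w) = (-1)^h Σ_{i≥0} (1/i!) α((L(1)^i v)_{2h-n-i-2} w)`, extended to general
`v` via the weight-space projections. -/
def dmode (v : V.carrier) (n : ℤ) (α : W.carrier → ℂ) (w : W.carrier) : ℂ :=
  ∑ᶠ h : ℤ, ∑ᶠ i : ℕ,
    ((-1 : ℂ) ^ h / (Nat.factorial i : ℂ)) *
      α (W.op ((V.L 1)^[i] (V.proj h v)) (2 * h - n - (i : ℤ) - 2) w)

/-- `D(W) ⊆ W*`: the linear functionals `α` on `W` such that for every `v ∈ V`,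
`Y*(v,x)α ∈ W*((x))`, i.e. `v*ₙ α = 0` for `n` sufficiently large. -/
def DW : Set (W.carrier → ℂ) :=
  {α | IsLinearMap ℂ α ∧
    ∀ v : V.carrier, ∃ N : ℤ, ∀ n : ℤ, N ≤ n → ∀ w : W.carrier, W.dmode v n α w = 0}

/-- A subspace stable under all modes of all vertex operators, i.e. a `V`-submodule. -/
def IsStable (S : Submodule ℂ W.carrier) : Prop :=
  ∀ (v : V.carrier) (n : ℤ), ∀ m ∈ S, W.op v n m ∈ S

/-- An irreducible (nonzero, no proper nonzero stable subspaces) `V`-submodule. -/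
def IsIrreducibleSub (S : Submodule ℂ W.carrier) : Prop :=
  S ≠ ⊥ ∧ W.IsStable S ∧
    ∀ T : Submodule ℂ W.carrier, W.IsStable T → T ≤ S → T = ⊥ ∨ T = S

/-- A stable subspace which is an ordinary module: `L(0)` acts semisimply on it with
finite-dimensional eigenspaces, and for each `h` the eigenvalues `h + m` do not occur
for `m` a sufficiently negative integer. -/
def IsOrdinarySub (S : Submodule ℂ W.carrier) : Prop :=
  S ≤ (⨆ h : ℂ, W.eig h ⊓ S) ∧ (∀ h : ℂ, FiniteDimensional ℂ ↥(W.eig h ⊓ S)) ∧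
    ∀ h : ℂ, ∃ N : ℤ, ∀ m : ℤ, m ≤ N → W.eig (h + (m : ℂ)) ⊓ S = ⊥

/-- The weak module `W` is irreducible. -/
def IsIrreducible : Prop :=
  (⊥ : Submodule ℂ W.carrier) ≠ ⊤ ∧
    ∀ S : Submodule ℂ W.carrier, W.IsStable S → S = ⊥ ∨ S = ⊤

/-- `Cₙ(W) = span{v₋ₙw : v ∈ V, w ∈ W}`. -/
def Cn (n : ℤ) : Submodule ℂ W.carrier :=
  Submodule.span ℂ {x : W.carrier | ∃ (v : V.carrier) (w : W.carrier), x = W.op v (-n) w}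

/-- `B(W) = span(u₋₁W (u ∈ V₊) together with v₀W (v homogeneous, wt v ≥ 2))`. -/
def BW : Submodule ℂ W.carrier :=
  Submodule.span ℂ
    ({x : W.carrier | ∃ v ∈ V.pos, ∃ w : W.carrier, x = W.op v (-1) w}
      ∪ {x : W.carrier | ∃ k : ℤ, 2 ≤ k ∧ ∃ v ∈ V.wtSpace k, ∃ w : W.carrier, x = W.op v 0 w})

/-- Zhu's subspace `O(W) = span{Σ_{i≥0} C(wt v, i) v_{i-2} w}` so that `A(W) = W/O(W)`. -/
def OW : Submodule ℂ W.carrier :=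
  Submodule.span ℂ
    {x : W.carrier | ∃ (k : ℤ) (v : V.carrier), v ∈ V.wtSpace k ∧
      ∃ w : W.carrier, x = ∑ᶠ i : ℕ, cchoose k i • W.op v ((i : ℤ) - 2) w}

/-- A subspace `T ⊇ O(W)` of `W` is closed under the Frenkel–Zhu left and right
`A(V)`-actions `v * w = Σᵢ C(wt v, i) v_{i-1} w` and `w * v = Σᵢ C(wt v - 1, i) v_{i-1} w`;
for `T ⊇ O(W)` this expresses that `T/O(W)` is an `A(V)`-sub-bimodule of `A(W)`. -/
def BimoduleClosed (T : Submodule ℂ W.carrier) : Prop :=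
  ∀ k : ℤ, ∀ v ∈ V.wtSpace k, ∀ w ∈ T,
    (∑ᶠ i : ℕ, cchoose k i • W.op v ((i : ℤ) - 1) w) ∈ T ∧
    (∑ᶠ i : ℕ, cchoose (k - 1) i • W.op v ((i : ℤ) - 1) w) ∈ T

/-- Equivalence (isomorphism) of weak modules. -/
def Equiv (M N : WeakModule V) : Prop :=
  ∃ e : M.carrier ≃ₗ[ℂ] N.carrier,
    ∀ (v : V.carrier) (n : ℤ) (w : M.carrier), e (M.op v n w) = N.op v n (e w)

end WeakModule

/-- `V` is of class 𝒜: `L(0)` acts semisimply on every weak `V`-module. -/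
def VOA.classA (V : VOA) : Prop :=
  ∀ M : WeakModule V, (⨆ h : ℂ, M.eig h) = ⊤

/-- `V` is regular: every weak `V`-module is a direct sum of irreducible ordinary
`V`-modules. -/
def VOA.regular (V : VOA) : Prop :=
  ∀ M : WeakModule V, ∃ (ι : Type) (S : ι → Submodule ℂ M.carrier),
    (∀ i, M.IsIrreducibleSub (S i) ∧ M.IsOrdinarySub (S i)) ∧
    (∀ i, Disjoint (S i) (⨆ (j : ι) (_ : j ≠ i), S j)) ∧ (⨆ i, S i) = ⊤

/-- A generalized `V`-module: a weak module with a semisimple `L(0)`-action, graded by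
the `L(0)`-eigenvalues, with weight-space projections `projW`. -/
structure GenModule (V : VOA) extends WeakModule V where
  wt : ℂ → Submodule ℂ carrier
  projW : ℂ → carrier → carrier
  projW_linear : ∀ h : ℂ, IsLinearMap ℂ (projW h)
  projW_mem : ∀ (h : ℂ) (w : carrier), projW h w ∈ wt h
  projW_eq : ∀ h : ℂ, ∀ w ∈ wt h, projW h w = w
  projW_ne : ∀ g h : ℂ, g ≠ h → ∀ w ∈ wt g, projW h w = 0
  projW_finite : ∀ w : carrier, (Function.support fun h => projW h w).Finite
  projW_sum : ∀ w : carrier, (∑ᶠ h : ℂ, projW h w) = w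
  wt_L0 : ∀ h : ℂ, ∀ w ∈ wt h, op V.omega 1 w = h • w
  wt_op : ∀ k : ℤ, ∀ v ∈ V.wtSpace k, ∀ (h : ℂ) (n : ℤ), ∀ w ∈ wt h,
    op v n w ∈ wt (h + (k : ℂ) - (n : ℂ) - 1)

/-- An ordinary `V`-module: a generalized module whose weight spaces are
finite-dimensional and whose weights are truncated from below in each coset `h + ℤ`. -/
structure OrdModule (V : VOA) extends GenModule V where
  wt_fd : ∀ h : ℂ, FiniteDimensional ℂ ↥(wt h)
  wt_lower : ∀ h : ℂ, ∃ N : ℤ, ∀ m : ℤ, m ≤ N → wt (h + (m : ℂ)) = ⊥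

namespace GenModule

variable {V : VOA} (W : GenModule V)

/-- `W₊ = ⊕_{Re h > 0} W₍ₕ₎`. -/
def posW : Submodule ℂ W.carrier := ⨆ (h : ℂ) (_ : 0 < h.re), W.wt h

/-- `C₁(W) = span(v₋₁W₊ (v ∈ V₊) together with L(-1)W)`. -/
def C1W : Submodule ℂ W.carrier :=
  Submodule.span ℂ
    ({x : W.carrier | ∃ v ∈ V.pos, ∃ w ∈ W.posW, x = W.op v (-1) w}
      ∪ {x : W.carrier | ∃ w : W.carrier, x = W.op V.omega 0 w})

/-- The restricted dual `W' = ⊕ₕ W₍ₕ₎* ⊆ W*`: the linear functionals vanishing on all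
but finitely many weight spaces. -/
def restrictedDual : Set (W.carrier → ℂ) :=
  {α | IsLinearMap ℂ α ∧ {h : ℂ | ∃ w ∈ W.wt h, α w ≠ 0}.Finite}

end GenModule

/-- `D(W)⁰`: the sum of the `L(0)`-eigenspaces of the weak module `D(W) ⊆ W*`, where
`L*(0) = ω*₁` acts on `α ∈ W*` by `(L*(0)α)(w) = α(L(0)w)`. -/
def OrdModule.DW0 {V : VOA} (W : OrdModule V) : Set (W.carrier → ℂ) :=
  {α | ∃ (S : Finset ℂ) (f : ℂ → (W.carrier → ℂ)),
    (∀ h ∈ S, f h ∈ W.toWeakModule.DW ∧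
      ∀ w : W.carrier, f h (W.op V.omega 1 w) = h * f h w) ∧
    α = ∑ h ∈ S, f h}

/-- An ℕ-gradable weak `V`-module: a weak module with an ℕ-grading
`W = ⊕_{n∈ℕ} W(n)` with `v_m W(n) ⊆ W(wt v + n - m - 1)` (graded pieces of negative
index are zero). -/
structure NGradedModule (V : VOA) extends WeakModule V where
  gr : ℤ → Submodule ℂ carrier
  gr_neg : ∀ n : ℤ, n < 0 → gr n = ⊥
  gr_sup : (⨆ n : ℤ, gr n) = ⊤
  gr_indep : ∀ n : ℤ, Disjoint (gr n) (⨆ (m : ℤ) (_ : m ≠ n), gr m)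
  gr_op : ∀ k : ℤ, ∀ v ∈ V.wtSpace k, ∀ m n : ℤ, ∀ w ∈ gr n,
    op v m w ∈ gr (k + n - m - 1)

/-- An intertwining operator of type `(W₃; W₁ W₂)` in the sense of
Frenkel–Huang–Lepowsky, recorded through its complex-indexed modes
`I w₁ h w₂ = (w₁)ₕ w₂` (so `Y(w₁,x)w₂ = Σ_{h∈ℂ} (w₁)ₕ w₂ x^{-h-1}`):
linearity, truncation, the `L(-1)`-derivative property, and the Jacobi identity in
component (Borcherds) form. -/
def IsIntertwiner {V : VOA} (W1 W2 W3 : OrdModule V)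
    (I : W1.carrier → ℂ → W2.carrier → W3.carrier) : Prop :=
  (∀ (h : ℂ) (w2 : W2.carrier), IsLinearMap ℂ fun w1 => I w1 h w2) ∧
  (∀ (w1 : W1.carrier) (h : ℂ), IsLinearMap ℂ (I w1 h)) ∧
  (∀ (w1 : W1.carrier) (w2 : W2.carrier) (h : ℂ),
    ∃ N : ℤ, ∀ n : ℤ, N ≤ n → I w1 (h + (n : ℂ)) w2 = 0) ∧
  (∀ (w1 : W1.carrier) (h : ℂ) (w2 : W2.carrier),
    I (W1.op V.omega 0 w1) h w2 = (-h) • I w1 (h - 1) w2) ∧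
  (∀ (u : V.carrier) (w1 : W1.carrier) (w2 : W2.carrier) (l m : ℤ) (h : ℂ),
    (∑ᶠ i : ℕ, cchoose m i • I (W1.op u (l + (i : ℤ)) w1) ((m : ℂ) + h - (i : ℂ)) w2)
      = ∑ᶠ i : ℕ, ((-1 : ℂ) ^ i * cchoose l i) •
          (W3.op u (l + m - (i : ℤ)) (I w1 (h + (i : ℂ)) w2)
            - ((-1 : ℂ) ^ l) • I w1 ((l : ℂ) + h - (i : ℂ)) (W2.op u (m + (i : ℤ)) w2)))

/-- The fusion rule `dim I(W₃; W₁W₂)` is finite: the space of intertwining operators of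
the indicated type is finite-dimensional. -/
def FusionFinite {V : VOA} (W1 W2 W3 : OrdModule V) : Prop :=
  FiniteDimensional ℂ
    ↥(Submodule.span ℂ {I : W1.carrier → ℂ → W2.carrier → W3.carrier |
        IsIntertwiner W1 W2 W3 I})

end

/-!
The coefficients of the adjoint vertex operator `Y*(v, x)` are the transposes of operators
`adjointMode n v` on `W`. Conjugating `Y(u, x)` by `e^{xL(1)}` shows that these operators satisfy
the Borcherds identity with the order of composition reversed, so that their transposes satisfy the
Borcherds identity itself and make `D(W)` a weak module. On this weak module `L(0)` acts by the
transpose of `L(0)` on `W`, and an eigenvector of eigenvalue `g` vanishes on `W₍ₕ₎` for every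
`h ≠ g`. As regularity forces `D(W)` to be spanned by such eigenvectors, `D(W) ⊆ W'`. Conversely,
`adjointMode n v` raises weights by `n + 1 - wt v`, so lower truncation of the weights of `W` makes
`v*ₙ α` vanish for large `n` whenever `α` is supported on finitely many weight spaces.
-/

noncomputable section

open Finset Filter

section Binomial

lemma cchoose_eq_intCast_choose (m : ℤ) (i : ℕ) : cchoose m i = (Ring.choose m i : ℤ) := by
  have h := Ring.descPochhammer_eq_factorial_smul_choose m i
  rw [← Polynomial.eval_eq_smeval, descPochhammer_eval_eq_prod_range, nsmul_eq_mul] at h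
  rw [cchoose, div_eq_iff (mod_cast i.factorial_ne_zero), mul_comm]
  exact_mod_cast h

@[simp]
lemma cchoose_zero_right (m : ℤ) : cchoose m 0 = 1 := by
  simp [cchoose_eq_intCast_choose]

lemma cchoose_natCast_eq_zero {m i : ℕ} (h : m < i) : cchoose m i = 0 := by
  simp [cchoose_eq_intCast_choose, Ring.choose_natCast, Nat.choose_eq_zero_of_lt h]

lemma cchoose_zero_left {i : ℕ} (hi : i ≠ 0) : cchoose 0 i = 0 :=
  cchoose_natCast_eq_zero (m := 0) (Nat.pos_of_ne_zero hi)

lemma cchoose_add_one (m : ℤ) (i : ℕ) :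
    cchoose (m + 1) (i + 1) = cchoose m i + cchoose m (i + 1) := by
  simp [cchoose_eq_intCast_choose, Ring.choose_succ_succ]

lemma cchoose_succ_mul (m : ℤ) (i : ℕ) :
    ((i : ℂ) + 1) * cchoose m (i + 1) = (m - i) * cchoose m i := by
  simp only [cchoose, prod_range_succ, Nat.factorial_succ]
  push_cast
  field_simp

lemma cchoose_eq_neg_one_pow_mul (m : ℤ) (i : ℕ) :
    cchoose m i = (-1) ^ i * cchoose (i - m - 1) i := by
  have h := Ring.choose_neg (-m) i
  rw [neg_neg, Units.smul_def, smul_eq_mul, show -m + i - 1 = i - m - 1 by ring] at h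
  rw [cchoose_eq_intCast_choose, cchoose_eq_intCast_choose, h]
  simp [Int.negOnePow]

lemma sum_antidiagonal_cchoose_mul (m N : ℤ) (t : ℕ) :
    ∑ x ∈ antidiagonal t, (-1) ^ x.1 * cchoose m x.1 * cchoose (N - x.1) x.2
      = cchoose (N - m) t := by
  have vandermonde := congrArg (Int.cast (R := ℂ))
    (Ring.add_choose_eq t (Commute.all m (t - N - 1)))
  push_cast [← cchoose_eq_intCast_choose] at vandermonde
  rw [cchoose_eq_neg_one_pow_mul, show (t : ℤ) - (N - m) - 1 = m + (t - N - 1) by ring,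
    vandermonde, mul_sum]
  refine sum_congr rfl fun x hx => ?_
  obtain rfl := mem_antidiagonal.1 hx
  rw [cchoose_eq_neg_one_pow_mul (N - x.1),
    show (x.2 : ℤ) - (N - x.1) - 1 = ((x.1 + x.2 : ℕ) : ℤ) - N - 1 by push_cast; ring, pow_add]
  ring

end Binomial

section Sums

variable {M : Type*}

lemma finsum_eq_sum_range [AddCommMonoid M] {f : ℕ → M} {K : ℕ} (h : ∀ i, K ≤ i → f i = 0) :
    ∑ᶠ i, f i = ∑ i ∈ range K, f i :=
  finsum_eq_sum_of_support_subset f fun i hi => by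
    simpa using not_le.1 fun hK => hi (h i hK)

lemma sum_range_sum_range_eq_sum_antidiagonal [AddCommMonoid M] {f : ℕ → ℕ → M} {K : ℕ}
    (h : ∀ i j, K ≤ i + j → f i j = 0) :
    ∑ i ∈ range K, ∑ j ∈ range K, f i j
      = ∑ t ∈ range K, ∑ x ∈ antidiagonal t, f x.1 x.2 := by
  simp only [Nat.sum_antidiagonal_eq_sum_range_succ f]
  refine Eq.trans (sum_congr rfl fun i _ => ?_) (sum_range_diag_flip K f).symm
  refine (sum_subset (range_mono (Nat.sub_le K i)) fun j _ hj => h i j ?_).symm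
  simp only [mem_range] at hj
  omega

lemma sum_range_cchoose_smul [AddCommGroup M] [Module ℂ M] (m N : ℤ) {f : ℕ → M} {K : ℕ}
    (h : ∀ t, K ≤ t → f t = 0) :
    ∑ i ∈ range K, ∑ j ∈ range K, ((-1) ^ i * cchoose m i * cchoose (N - i) j) • f (i + j)
      = ∑ t ∈ range K, cchoose (N - m) t • f t := by
  rw [sum_range_sum_range_eq_sum_antidiagonal fun i j hij => by rw [h _ hij, smul_zero]]
  refine sum_congr rfl fun t _ => ?_
  rw [← sum_antidiagonal_cchoose_mul, sum_smul]
  exact sum_congr rfl fun x hx => by rw [mem_antidiagonal.1 hx]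

lemma finite_support_of_eventually_atTop [Zero M] {f : ℕ → M} (h : ∀ᶠ i in atTop, f i = 0) :
    f.support.Finite := by
  rwa [← Nat.cofinite_eq_atTop] at h

lemma finite_support_smul_map_sub_map [AddCommGroup M] [Module ℂ M] {N : Type*} [AddCommGroup N]
    [Module ℂ N] {f g : ℕ → M} (hf : ∀ᶠ i in atTop, f i = 0) (hg : ∀ᶠ i in atTop, g i = 0)
    (F G : ℕ → M →ₗ[ℂ] N) (c : ℕ → ℂ) (d : ℂ) :
    (fun i => c i • (F i (f i) - d • G i (g i))).support.Finite := by
  refine finite_support_of_eventually_atTop ?_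
  filter_upwards [hf, hg] with i hf hg
  simp [hf, hg]

lemma finsum_sum_sum_comm [AddCommMonoid M] {ι κ τ : Type*} {s : Finset κ} {t : Finset τ}
    {f : κ → τ → ι → M} (h : ∀ p q, (f p q).support.Finite) :
    ∑ᶠ i, ∑ p ∈ s, ∑ q ∈ t, f p q i = ∑ p ∈ s, ∑ q ∈ t, ∑ᶠ i, f p q i := by
  simp only [← sum_product']
  exact finsum_sum_comm (s ×ˢ t) (fun i x => f x.1 x.2 i) fun x _ => h x.1 x.2

/-- The pointwise sum of a family of linear maps which is finite at every vector. -/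
def pointwiseFinsum {ι R M N : Type*} [Semiring R] [AddCommMonoid M] [AddCommMonoid N]
    [Module R M] [Module R N] (f : ι → M →ₗ[R] N)
    (hf : ∀ x, (fun i => f i x).support.Finite) : M →ₗ[R] N where
  toFun x := ∑ᶠ i, f i x
  map_add' x y := by simp only [map_add, finsum_add_distrib (hf x) (hf y)]
  map_smul' c x := by simp only [map_smul, smul_finsum' c (hf x), RingHom.id_apply]

lemma map_pointwiseFinsum {ι R M N P : Type*} [Semiring R] [AddCommMonoid M] [AddCommMonoid N]
    [AddCommMonoid P] [Module R M] [Module R N] [Module R P] (g : N →ₗ[R] P) (f : ι → M →ₗ[R] N)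
    (hf : ∀ x, (fun i => f i x).support.Finite) (x : M) :
    g (pointwiseFinsum f hf x) = ∑ᶠ i, g (f i x) :=
  g.toAddMonoidHom.map_finsum (hf x)

end Sums

lemma tendsto_const_add_natCast_atTop (a : ℤ) : Tendsto (fun i : ℕ => a + i) atTop atTop :=
  tendsto_atTop_add_const_left _ a tendsto_natCast_atTop_atTop

lemma tendsto_const_sub_natCast_atBot (a : ℤ) : Tendsto (fun i : ℕ => a - i) atTop atBot :=
  tendsto_neg_atTop_iff.1 <| by
    simpa [neg_sub, sub_eq_neg_add] using tendsto_const_add_natCast_atTop (-a)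

namespace VOA

variable {V : VOA}

lemma homogeneous_induction {p : V.carrier → Prop} (add : ∀ u v, p u → p v → p (u + v))
    (homogeneous : ∀ h, ∀ v ∈ V.wtSpace h, p v) (v : V.carrier) : p v :=
  V.proj_sum v ▸ finsum_induction p (homogeneous 0 0 (zero_mem _)) (@fun u v => add u v)
    fun h => homogeneous h _ (V.proj_mem h v)

lemma finsum_eq_finsum_of_homogeneous {M : Type*} [AddCommMonoid M] {F G : V.carrier → ℕ → M}
    (F_add : ∀ u v, F (u + v) = F u + F v) (G_add : ∀ u v, G (u + v) = G u + G v)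
    (F_finite : ∀ u, (F u).support.Finite) (G_finite : ∀ u, (G u).support.Finite)
    (homogeneous : ∀ h, ∀ u ∈ V.wtSpace h, ∑ᶠ i, F u i = ∑ᶠ i, G u i) (u : V.carrier) :
    ∑ᶠ i, F u i = ∑ᶠ i, G u i := by
  refine homogeneous_induction (fun u v hu hv => ?_) homogeneous u
  simp only [F_add, G_add, Pi.add_apply]
  rw [finsum_add_distrib (F_finite u) (F_finite v), finsum_add_distrib (G_finite u) (G_finite v),
    hu, hv]

variable (V) in
lemma eventually_wtSpace_sub_eq_bot (h : ℤ) : ∀ᶠ i : ℕ in atTop, V.wtSpace (h - i) = ⊥ := by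
  obtain ⟨N, hN⟩ := V.lower_trunc
  exact (tendsto_const_sub_natCast_atBot h).eventually ((eventually_lt_atBot N).mono hN)

variable (V) in
/-- The modes `u ↦ uₙ` of the vertex operator map, as a bilinear map `(u, v) ↦ uₙv`. -/
def mode (n : ℤ) : V.carrier →ₗ[ℂ] Module.End ℂ V.carrier :=
  LinearMap.mk₂ ℂ (fun u v => V.op u n v) (fun u u' v => (V.op_linear_left n v).map_add u u')
    (fun c u v => (V.op_linear_left n v).map_smul c u) (fun u => (V.op_linear_right u n).map_add)
    fun c u => (V.op_linear_right u n).map_smul c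

@[simp]
lemma mode_apply (n : ℤ) (u v : V.carrier) : V.mode n u v = V.op u n v := rfl

lemma eventually_op_eq_zero (u v : V.carrier) : ∀ᶠ n in atTop, V.op u n v = 0 :=
  eventually_atTop.2 (V.trunc u v)

lemma finite_support_map_op {M : Type*} [AddCommMonoid M] [Module ℂ M] (u v : V.carrier) (l : ℤ)
    (F : ℕ → V.carrier →ₗ[ℂ] M) : (fun i : ℕ => F i (V.op u (l + i) v)).support.Finite :=
  finite_support_of_eventually_atTop <| ((tendsto_const_add_natCast_atTop l).eventually
    (eventually_op_eq_zero u v)).mono fun i hi => by rw [hi, map_zero]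

variable (V) in
/-- The operator `L(1)` on `V`, as a linear map. -/
def lOne : Module.End ℂ V.carrier := V.mode 2 V.omega

lemma lOne_mem {h : ℤ} {v : V.carrier} (hv : v ∈ V.wtSpace h) : V.lOne v ∈ V.wtSpace (h - 1) := by
  simpa [lOne, show 2 + h - 2 - 1 = h - 1 by ring] using V.op_wt 2 h 2 _ V.omega_wt v hv

lemma lOne_op {h : ℤ} {u : V.carrier} (hu : u ∈ V.wtSpace h) (n : ℤ) (v : V.carrier) :
    V.lOne (V.op u n v) = ((2 * h - n - 2 : ℤ) : ℂ) • V.op u (n + 1) v + V.op (V.lOne u) n v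
      + V.op u n (V.lOne v) := by
  have commutator := V.borcherds V.omega u v 0 2 n
  have cchoose_two_eq_zero (i : ℕ) (hi : 3 ≤ i) : cchoose 2 i = 0 :=
    cchoose_natCast_eq_zero (m := 2) hi
  rw [finsum_eq_sum_range (K := 3) fun i hi => by rw [cchoose_two_eq_zero i hi, zero_smul],
    finsum_eq_sum_range (K := 1) fun i hi => by
      rw [cchoose_zero_left (Nat.pos_iff_ne_zero.1 hi), mul_zero, zero_smul]]
    at commutator
  have cchoose_two_one : cchoose 2 1 = 2 := by simp [cchoose]
  have cchoose_two_two : cchoose 2 2 = 1 := by norm_num [cchoose, prod_range_succ]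
  have L_zero : V.op V.omega 1 u = (h : ℂ) • u := V.L_zero h u hu
  simp only [sum_range_succ, sum_range_zero, cchoose_zero_right, cchoose_two_one, cchoose_two_two,
    L_zero, V.L_neg_one, (V.op_linear_left _ v).map_smul, smul_smul, Nat.cast_zero, Nat.cast_one,
    Nat.cast_ofNat, add_zero, zero_add, sub_zero, pow_zero, zpow_zero, one_smul, one_mul,
    add_sub_right_comm (2 : ℤ) n, add_comm (1 : ℤ) n, show (2 : ℤ) - 1 = 1 from rfl, sub_self,
    ← add_smul] at commutator
  rw [eq_sub_iff_add_eq] at commutator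
  rw [lOne, mode_apply, mode_apply, mode_apply, ← commutator]
  congr 3
  push_cast
  ring

variable (V) in
/-- The divided power `L(1)ᵖ / p!`, the coefficient of `xᵖ` in `e^{xL(1)}`. -/
def lOneDPow (p : ℕ) : Module.End ℂ V.carrier := (p.factorial : ℂ)⁻¹ • V.lOne ^ p

@[simp]
lemma lOneDPow_zero : V.lOneDPow 0 = 1 := by simp [lOneDPow]

lemma lOne_lOneDPow (p : ℕ) (v : V.carrier) :
    V.lOne (V.lOneDPow p v) = ((p : ℂ) + 1) • V.lOneDPow (p + 1) v := by
  have : (p : ℂ) + 1 ≠ 0 := by exact_mod_cast p.succ_ne_zero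
  simp only [lOneDPow, LinearMap.smul_apply, map_smul, pow_succ', Module.End.mul_apply, smul_smul,
    Nat.factorial_succ]
  push_cast
  rw [mul_inv, mul_inv_cancel_left₀ this]

lemma lOneDPow_mem {h : ℤ} {v : V.carrier} (hv : v ∈ V.wtSpace h) (p : ℕ) :
    V.lOneDPow p v ∈ V.wtSpace (h - p) := by
  refine Submodule.smul_mem _ _ ?_
  induction p with
  | zero => simpa using hv
  | succ p ih =>
    rw [pow_succ', Module.End.mul_apply, Nat.cast_succ, ← sub_sub]
    exact lOne_mem ih

lemma lOneDPow_eq_zero {h : ℤ} {v : V.carrier} (hv : v ∈ V.wtSpace h) {p : ℕ}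
    (hp : V.wtSpace (h - p) = ⊥) : V.lOneDPow p v = 0 :=
  (Submodule.eq_bot_iff _).1 hp _ (lOneDPow_mem hv p)

lemma eventually_lOneDPow_eq_zero (v : V.carrier) : ∀ᶠ p in atTop, V.lOneDPow p v = 0 := by
  refine homogeneous_induction (p := fun v => ∀ᶠ p in atTop, V.lOneDPow p v = 0)
    (fun u v hu hv => ?_) (fun h v hv => ?_) v
  · filter_upwards [hu, hv] with p hu hv
    rw [map_add, hu, hv, add_zero]
  · exact (V.eventually_wtSpace_sub_eq_bot h).mono fun p => lOneDPow_eq_zero hv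

lemma lOneDPow_eq_zero_of_lOne_eq_zero {v : V.carrier} (hv : V.lOne v = 0) {p : ℕ} (hp : 1 ≤ p) :
    V.lOneDPow p v = 0 := by
  obtain ⟨p, rfl⟩ := Nat.exists_eq_add_of_le' hp
  rw [lOneDPow, LinearMap.smul_apply, pow_succ, Module.End.mul_apply, hv, map_zero, smul_zero]

lemma lOne_one : V.lOne V.one = 0 := V.create_nonneg V.omega 2 (by norm_num)

lemma lOne_omega : V.lOne V.omega = 0 := by
  have commutator := V.virasoro 1 (-2) V.one
  norm_num [V.create, V.create_nonneg, (V.op_linear_right V.omega (-1)).map_zero] at commutator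
  exact commutator

section Conjugation

variable {M : Type*} [AddCommGroup M]

lemma sum_antidiagonal_succ_add_succ {F G : ℕ → ℕ → M} (hF : ∀ n, F 0 n = 0)
    (hG : ∀ n, G n 0 = 0) (t : ℕ) :
    ∑ x ∈ antidiagonal t, (F (x.1 + 1) x.2 + G x.1 (x.2 + 1))
      = ∑ x ∈ antidiagonal (t + 1), (F x.1 x.2 + G x.1 x.2) := by
  have shift_fst := Nat.sum_antidiagonal_succ (n := t) (f := fun x => F x.1 x.2)
  have shift_snd := Nat.sum_antidiagonal_succ' (n := t) (f := fun x => G x.1 x.2)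
  rw [sum_add_distrib, sum_add_distrib, shift_fst, shift_snd, hF, hG, zero_add, zero_add]

variable [Module ℂ M]

lemma sum_antidiagonal_leibniz (s : ℕ) (f : ℕ → ℕ → M) :
    ∑ x ∈ antidiagonal s,
        (((x.1 : ℂ) + 1) • f (x.1 + 1) x.2 + ((x.2 : ℂ) + 1) • f x.1 (x.2 + 1))
      = ((s : ℂ) + 1) • ∑ x ∈ antidiagonal (s + 1), f x.1 x.2 := by
  have shift := sum_antidiagonal_succ_add_succ (F := fun i j => (i : ℂ) • f i j)
    (G := fun i j => (j : ℂ) • f i j) (by simp) (by simp) s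
  push_cast at shift
  rw [shift, smul_sum]
  refine sum_congr rfl fun x hx => ?_
  rw [← add_smul, ← Nat.cast_add, mem_antidiagonal.1 hx, Nat.cast_add_one]

lemma sum_antidiagonal_cchoose_smul (N : ℤ) (t : ℕ) (f : ℕ → ℕ → M) :
    ∑ x ∈ antidiagonal t, cchoose (N - x.1) x.2 •
        (((x.1 : ℂ) + 1) • f (x.1 + 1) x.2 + ((N : ℂ) - 2 * x.1 - x.2) • f x.1 (x.2 + 1))
      = ((t : ℂ) + 1) • ∑ x ∈ antidiagonal (t + 1), cchoose (N - x.1) x.2 • f x.1 x.2 := by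
  have shift := sum_antidiagonal_succ_add_succ
    (F := fun p j => (p * cchoose (N - p + 1) j) • f p j)
    (G := fun p j => ((p + j) * cchoose (N - p) j - p * cchoose (N - p + 1) j) • f p j)
    (by simp) (by simp) t
  trans ∑ x ∈ antidiagonal (t + 1), ((x.1 + x.2 : ℂ) * cchoose (N - x.1) x.2) • f x.1 x.2
  · simp only [← add_smul, add_sub_cancel] at shift
    rw [← shift]
    refine sum_congr rfl fun x _ => ?_
    have absorption := cchoose_succ_mul (N - x.1) x.2
    push_cast at absorption ⊢
    rw [cchoose_add_one, smul_add, smul_smul, smul_smul, sub_add_eq_sub_sub, sub_add_cancel]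
    congr 2
    · ring
    · linear_combination -absorption
  · rw [smul_sum]
    refine sum_congr rfl fun x hx => ?_
    rw [smul_smul, ← Nat.cast_add, mem_antidiagonal.1 hx, Nat.cast_add_one]

end Conjugation

variable (V) in
/-- The coefficient of `xᵗ` in `e^{xL(1)} uₗ e^{-xL(1)}`, for `u` of weight `h`. -/
def lOneConj (h l : ℤ) (u : V.carrier) (t : ℕ) : Module.End ℂ V.carrier :=
  ∑ x ∈ antidiagonal t,
    cchoose (2 * h - 2 - l - x.1) x.2 • V.mode (l + x.2) (V.lOneDPow x.1 u)

lemma lOne_lOneConj {h : ℤ} {u : V.carrier} (hu : u ∈ V.wtSpace h) (l : ℤ) (t : ℕ)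
    (v : V.carrier) :
    V.lOne (V.lOneConj h l u t v)
      = ((t : ℂ) + 1) • V.lOneConj h l u (t + 1) v + V.lOneConj h l u t (V.lOne v) := by
  have shift := sum_antidiagonal_cchoose_smul (2 * h - 2 - l) t
    fun p j => V.op (V.lOneDPow p u) (l + j) v
  simp only [lOneConj, LinearMap.sum_apply, LinearMap.smul_apply, mode_apply, map_sum, map_smul]
  rw [← shift, ← sum_add_distrib]
  refine sum_congr rfl fun x _ => ?_
  rw [← smul_add, lOne_op (lOneDPow_mem hu x.1), lOne_lOneDPow,
    (V.op_linear_left _ v).map_smul, add_comm (_ • V.op _ (_ + 1) v)]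
  congr 4
  · push_cast
    ring
  · rw [Nat.cast_add_one, add_assoc]

lemma lOneDPow_op {h : ℤ} {u : V.carrier} (hu : u ∈ V.wtSpace h) (l : ℤ) (v : V.carrier) (s : ℕ) :
    V.lOneDPow s (V.op u l v)
      = ∑ x ∈ antidiagonal s, V.lOneConj h l u x.2 (V.lOneDPow x.1 v) := by
  induction s with
  | zero => simp [lOneConj]
  | succ s ih =>
    have hs : (s : ℂ) + 1 ≠ 0 := by exact_mod_cast s.succ_ne_zero
    refine smul_right_injective _ hs ?_
    dsimp only
    rw [← lOne_lOneDPow, ih, map_sum,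
      ← sum_antidiagonal_leibniz s fun q t => V.lOneConj h l u t (V.lOneDPow q v)]
    refine sum_congr rfl fun x _ => ?_
    rw [lOne_lOneConj hu, lOne_lOneDPow, map_smul, add_comm]

lemma op_lOneDPow_eq_zero {h k l : ℤ} {u v : V.carrier} (hu : u ∈ V.wtSpace h)
    (hv : v ∈ V.wtSpace k) {p q j : ℕ} (hbot : V.wtSpace (h + k - l - 1 - (p + q + j : ℕ)) = ⊥) :
    V.op (V.lOneDPow p u) (l + j) (V.lOneDPow q v) = 0 := by
  refine (Submodule.eq_bot_iff _).1 hbot _ ?_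
  convert V.op_wt _ _ (l + j) _ (lOneDPow_mem hu p) _ (lOneDPow_mem hv q) using 2
  push_cast
  ring

lemma sum_lOneDPow_op {M : Type*} [AddCommGroup M] [Module ℂ M] {h k l : ℤ} {u v : V.carrier}
    (hu : u ∈ V.wtSpace h) (hv : v ∈ V.wtSpace k) {K : ℕ}
    (hK : ∀ i : ℕ, K ≤ i → V.wtSpace (h + k - l - 1 - i) = ⊥) (ψ : ℕ → V.carrier →ₗ[ℂ] M) :
    ∑ s ∈ range K, ψ s (V.lOneDPow s (V.op u l v))
      = ∑ q ∈ range K, ∑ p ∈ range K, ∑ j ∈ range K, cchoose (2 * h - 2 - l - p) j •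
          ψ (p + q + j) (V.op (V.lOneDPow p u) (l + j) (V.lOneDPow q v)) := by
  have vanish (p q j : ℕ) (hpqj : K ≤ p + q + j) :
      V.op (V.lOneDPow p u) (l + j) (V.lOneDPow q v) = 0 :=
    op_lOneDPow_eq_zero hu hv (hK _ hpqj)
  calc
    _ = ∑ s ∈ range K, ∑ x ∈ antidiagonal s,
          ψ (x.1 + x.2) (V.lOneConj h l u x.2 (V.lOneDPow x.1 v)) := by
      refine sum_congr rfl fun s _ => ?_
      rw [lOneDPow_op hu, map_sum]
      refine sum_congr rfl fun x hx => ?_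
      rw [mem_antidiagonal.1 hx]
    _ = ∑ q ∈ range K, ∑ t ∈ range K, ψ (q + t) (V.lOneConj h l u t (V.lOneDPow q v)) := by
      refine (sum_range_sum_range_eq_sum_antidiagonal
        (f := fun q t => ψ (q + t) (V.lOneConj h l u t (V.lOneDPow q v))) fun q t hqt => ?_).symm
      rw [lOneConj, LinearMap.sum_apply, sum_eq_zero, map_zero]
      intro x hx
      rw [LinearMap.smul_apply, mode_apply, vanish, smul_zero]
      have := mem_antidiagonal.1 hx
      omega
    _ = _ := by
      refine sum_congr rfl fun q _ => ?_
      rw [sum_range_sum_range_eq_sum_antidiagonal fun p j hpj => by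
        rw [vanish _ _ _ (by omega), map_zero, smul_zero]]
      refine sum_congr rfl fun t _ => ?_
      rw [lOneConj, LinearMap.sum_apply, map_sum]
      refine sum_congr rfl fun x hx => ?_
      rw [LinearMap.smul_apply, mode_apply, map_smul, ← mem_antidiagonal.1 hx]
      congr 2
      ring_nf

end VOA

namespace WeakModule

variable {V : VOA} (W : WeakModule V)

/-- The modes `u ↦ uₙ` acting on a weak module, as a bilinear map `(u, w) ↦ uₙw`. -/
def mode (n : ℤ) : V.carrier →ₗ[ℂ] Module.End ℂ W.carrier :=
  LinearMap.mk₂ ℂ (fun u w => W.op u n w) (fun u u' w => (W.op_linear_left n w).map_add u u')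
    (fun c u w => (W.op_linear_left n w).map_smul c u) (fun u => (W.op_linear_right u n).map_add)
    fun c u => (W.op_linear_right u n).map_smul c

variable {W}

@[simp]
lemma mode_apply (n : ℤ) (u : V.carrier) (w : W.carrier) : W.mode n u w = W.op u n w := rfl

lemma eventually_op_eq_zero (u : V.carrier) (w : W.carrier) : ∀ᶠ n in atTop, W.op u n w = 0 :=
  eventually_atTop.2 (W.trunc u w)

variable (W) in
/-- The mode `v ↦ v*ₙ` of the adjoint vertex operator, given on `V₍ₕ₎` by
`v ↦ (-1)ʰ Σᵢ (1/i!) (L(1)ⁱv)_{2h-n-i-2}`. Everything acts on `W` rather than on its dual: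
`v*ₙ` on `W*` is the transpose of the operator considered here. -/
def homogeneousAdjointMode (h n : ℤ) : V.carrier →ₗ[ℂ] Module.End ℂ W.carrier :=
  pointwiseFinsum
    (fun i : ℕ => (-1 : ℂ) ^ h • (W.mode (2 * h - n - i - 2) ∘ₗ V.lOneDPow i)) fun v =>
    finite_support_of_eventually_atTop <| (VOA.eventually_lOneDPow_eq_zero v).mono fun i hi => by
      simp [hi]

variable (W) in
/-- The mode `v ↦ v*ₙ` of the adjoint vertex operator, acting on `W`. -/
def adjointMode (n : ℤ) : V.carrier →ₗ[ℂ] Module.End ℂ W.carrier :=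
  pointwiseFinsum
    (fun h : ℤ => W.homogeneousAdjointMode h n ∘ₗ IsLinearMap.mk' _ (V.proj_linear h)) fun v =>
    (V.proj_finite v).subset fun h hh hv => hh (by simp [hv])

lemma dmode_eq_adjointMode (v : V.carrier) (n : ℤ) (α : W.carrier →ₗ[ℂ] ℂ) (w : W.carrier) :
    W.dmode v n α w = α (W.adjointMode n v w) := by
  let eval : Module.End ℂ W.carrier →ₗ[ℂ] ℂ := α ∘ₗ LinearMap.applyₗ w
  refine (finsum_congr fun h => ?_).trans (map_pointwiseFinsum eval _ _ v).symm
  change _ = eval (W.homogeneousAdjointMode h n (V.proj h v))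
  rw [homogeneousAdjointMode, map_pointwiseFinsum]
  refine finsum_congr fun i => ?_
  have L_one_iterate (x : V.carrier) : (V.L 1)^[i] x = (V.lOne ^ i) x := by
    rw [Module.End.pow_apply]
    rfl
  simp [eval, VOA.lOneDPow, L_one_iterate, div_eq_mul_inv, mul_assoc]

lemma adjointMode_apply_of_mem {h : ℤ} {u : V.carrier} (hu : u ∈ V.wtSpace h) {K : ℕ}
    (hK : ∀ p, K ≤ p → V.lOneDPow p u = 0) (n : ℤ) (w : W.carrier) :
    W.adjointMode n u w
      = (-1 : ℂ) ^ h • ∑ p ∈ range K, W.op (V.lOneDPow p u) (2 * h - n - p - 2) w := by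
  have single : W.adjointMode n u = W.homogeneousAdjointMode h n u := by
    refine (finsum_eq_single _ h fun k hk => ?_).trans ?_
    · simp [V.proj_ne h k hk.symm u hu]
    · simp [V.proj_eq h u hu]
  rw [single]
  change (∑ᶠ p : ℕ, (-1 : ℂ) ^ h • W.mode (2 * h - n - p - 2) (V.lOneDPow p u)) w = _
  rw [finsum_eq_sum_range fun p hp => by rw [hK p hp, map_zero, smul_zero]]
  simp [smul_sum]

lemma eventually_adjointMode_apply_eq_zero (v : V.carrier) (w : W.carrier) :
    ∀ᶠ n in atBot, W.adjointMode n v w = 0 := by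
  refine VOA.homogeneous_induction (p := fun v => ∀ᶠ n in atBot, W.adjointMode n v w = 0)
    (fun u v hu hv => ?_) (fun h v hv => ?_) v
  · filter_upwards [hu, hv] with n hu hv
    rw [map_add, LinearMap.add_apply, hu, hv, add_zero]
  · obtain ⟨K, hK⟩ := eventually_atTop.1 (VOA.eventually_lOneDPow_eq_zero v)
    have trunc (p : ℕ) : ∀ᶠ n in atBot, W.op (V.lOneDPow p v) (2 * h - n - p - 2) w = 0 := by
      obtain ⟨N, hN⟩ := W.trunc (V.lOneDPow p v) w
      filter_upwards [eventually_le_atBot (2 * h - p - 2 - N)] with n hn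
      exact hN _ (by omega)
    filter_upwards [(eventually_all_finset (range K)).2 fun p _ => trunc p] with n hn
    rw [adjointMode_apply_of_mem hv hK, sum_eq_zero hn, smul_zero]

lemma adjointMode_one (n : ℤ) (w : W.carrier) :
    W.adjointMode n V.one w = if n = -1 then w else 0 := by
  rw [adjointMode_apply_of_mem V.one_wt (K := 1) fun p hp =>
    VOA.lOneDPow_eq_zero_of_lOne_eq_zero VOA.lOne_one hp]
  simp [W.one_op, show -n - 2 = -1 ↔ n = -1 by omega]

lemma adjointMode_omega (w : W.carrier) : W.adjointMode 1 V.omega w = W.L0 w := by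
  rw [adjointMode_apply_of_mem V.omega_wt (K := 1) fun p hp =>
    VOA.lOneDPow_eq_zero_of_lOne_eq_zero VOA.lOne_omega hp]
  simp [L0]

section Borcherds

variable {h k l : ℤ} {u v : V.carrier} {K : ℕ}

lemma adjointMode_op_apply (hu : u ∈ V.wtSpace h) (hv : v ∈ V.wtSpace k)
    (hK : ∀ i : ℕ, K ≤ i → V.wtSpace (h + k - l - 1 - i) = ⊥) (n : ℤ) (w : W.carrier) :
    W.adjointMode n (V.op u l v) w = (-1 : ℂ) ^ (h + k - l - 1) •
      ∑ q ∈ range K, ∑ p ∈ range K, ∑ j ∈ range K, cchoose (2 * h - 2 - l - p) j •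
        W.op (V.op (V.lOneDPow p u) (l + j) (V.lOneDPow q v))
          (2 * (h + k - l - 1) - n - (p + q + j : ℕ) - 2) w := by
  have weight := V.op_wt h k l u hu v hv
  rw [adjointMode_apply_of_mem weight fun s hs => VOA.lOneDPow_eq_zero weight (hK s hs)]
  exact congrArg _ (VOA.sum_lOneDPow_op hu hv hK fun s =>
    LinearMap.applyₗ w ∘ₗ W.mode (2 * (h + k - l - 1) - n - s - 2))

lemma adjointMode_op_add_natCast_apply (hu : u ∈ V.wtSpace h) (hv : v ∈ V.wtSpace k)
    (hK : ∀ i : ℕ, K ≤ i → V.wtSpace (h + k - l - 1 - i) = ⊥) (n : ℤ) (i : ℕ) (w : W.carrier) :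
    W.adjointMode (n - i) (V.op u (l + i) v) w = (-1 : ℂ) ^ (h + k - l - 1) • (-1 : ℂ) ^ i •
      ∑ q ∈ range K, ∑ p ∈ range K, ∑ j ∈ range K, cchoose (2 * h - 2 - l - p - i) j •
        W.op (V.op (V.lOneDPow p u) (l + (i + j : ℕ)) (V.lOneDPow q v))
          (2 * (h + k - l - 1) - n - (p + q + (i + j) : ℕ) - 2) w := by
  have sign : (-1 : ℂ) ^ (h + k - (l + i) - 1) = (-1) ^ (h + k - l - 1) * (-1) ^ i := by
    rw [show h + k - (l + i) - 1 = h + k - l - 1 - i by ring, zpow_sub₀ (by norm_num),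
      zpow_natCast, div_eq_mul_inv, ← inv_pow, inv_neg_one]
  have truncation (j : ℕ) (hj : K ≤ j) : V.wtSpace (h + k - (l + i) - 1 - j) = ⊥ := by
    convert hK (i + j) (by omega) using 2
    push_cast
    ring
  rw [adjointMode_op_apply hu hv truncation, sign, mul_smul]
  congr 2
  refine sum_congr rfl fun q _ => sum_congr rfl fun p _ => sum_congr rfl fun j _ => ?_
  push_cast
  ring_nf

-- The sum over `i` and the sum coming from conjugation by `e^{xL(1)}` collapse by Vandermonde.
lemma finsum_adjointMode_op (hu : u ∈ V.wtSpace h) (hv : v ∈ V.wtSpace k)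
    (hK : ∀ i : ℕ, K ≤ i → V.wtSpace (h + k - l - 1 - i) = ⊥) (m n : ℤ) (w : W.carrier) :
    ∑ᶠ i : ℕ, cchoose m i • W.adjointMode (m + n - i) (V.op u (l + i) v) w
      = (-1 : ℂ) ^ (h + k - l - 1) •
        ∑ q ∈ range K, ∑ p ∈ range K, ∑ t ∈ range K, cchoose (2 * h - 2 - l - p - m) t •
          W.op (V.op (V.lOneDPow p u) (l + t) (V.lOneDPow q v))
            (2 * (h + k - l - 1) - (m + n) - (p + q + t : ℕ) - 2) w := by
  let X (p q t : ℕ) : W.carrier := W.op (V.op (V.lOneDPow p u) (l + t) (V.lOneDPow q v))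
    (2 * (h + k - l - 1) - (m + n) - (p + q + t : ℕ) - 2) w
  have X_eq_zero (p q t : ℕ) (ht : K ≤ t) : X p q t = 0 := by
    simp only [X]
    rw [VOA.op_lOneDPow_eq_zero hu hv (hK _ (by omega)), (W.op_linear_left _ w).map_zero]
  have op_eq_zero (i : ℕ) (hi : K ≤ i) : V.op u (l + i) v = 0 := by
    simpa using VOA.op_lOneDPow_eq_zero (p := 0) (q := 0) hu hv (hK _ (by omega))
  rw [finsum_eq_sum_range fun i hi => by rw [op_eq_zero i hi]; simp]
  calc
    _ = (-1 : ℂ) ^ (h + k - l - 1) • ∑ q ∈ range K, ∑ p ∈ range K, ∑ i ∈ range K, ∑ j ∈ range K,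
          ((-1) ^ i * cchoose m i * cchoose (2 * h - 2 - l - p - i) j) • X p q (i + j) := by
      simp only [adjointMode_op_add_natCast_apply hu hv hK, smul_sum, smul_smul]
      rw [sum_comm]
      refine sum_congr rfl fun q _ => ?_
      rw [sum_comm]
      refine sum_congr rfl fun p _ => sum_congr rfl fun i _ => sum_congr rfl fun j _ => ?_
      congr 1
      ring
    _ = _ := by simp only [sum_range_cchoose_smul m _ (X_eq_zero _ _), X]

lemma adjointMode_adjointMode_apply (hu : u ∈ V.wtSpace h) (hv : v ∈ V.wtSpace k)
    (hu_K : ∀ p, K ≤ p → V.lOneDPow p u = 0) (hv_K : ∀ q, K ≤ q → V.lOneDPow q v = 0)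
    (a b : ℤ) (w : W.carrier) :
    W.adjointMode a u (W.adjointMode b v w) = (-1 : ℂ) ^ (h + k) •
      ∑ p ∈ range K, ∑ q ∈ range K, W.op (V.lOneDPow p u) (2 * h - a - p - 2)
        (W.op (V.lOneDPow q v) (2 * k - b - q - 2) w) := by
  rw [adjointMode_apply_of_mem hv hv_K, map_smul, adjointMode_apply_of_mem hu hu_K, smul_smul,
    zpow_add₀ (by norm_num), mul_comm]
  simp only [← mode_apply, map_sum]

lemma finsum_op_op (u v : V.carrier) (w : W.carrier) (l m n : ℤ) :
    ∑ᶠ i : ℕ, ((-1 : ℂ) ^ i * cchoose l i) •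
        (W.op v (l + n - i) (W.op u (m + i) w)
          - (-1 : ℂ) ^ l • W.op u (l + m - i) (W.op v (n + i) w))
      = -(-1 : ℂ) ^ l • ∑ᶠ i : ℕ, cchoose m i • W.op (V.op u (l + i) v) (m + n - i) w := by
  have sign : (-1 : ℂ) ^ l * (-1 : ℂ) ^ l = 1 := by rw [← mul_zpow]; simp
  rw [W.borcherds, smul_finsum]
  refine finsum_congr fun i => ?_
  rw [smul_comm]
  congr 1
  rw [smul_sub, smul_smul, neg_mul, sign]
  module

lemma adjointMode_commutator_apply (hu : u ∈ V.wtSpace h) (hv : v ∈ V.wtSpace k)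
    (hu_K : ∀ p, K ≤ p → V.lOneDPow p u = 0) (hv_K : ∀ q, K ≤ q → V.lOneDPow q v = 0)
    (m n : ℤ) (i : ℕ) (w : W.carrier) :
    W.adjointMode (n + i) v (W.adjointMode (l + m - i) u w)
        - (-1 : ℂ) ^ l • W.adjointMode (m + i) u (W.adjointMode (l + n - i) v w)
      = (-1 : ℂ) ^ (h + k) • ∑ q ∈ range K, ∑ p ∈ range K,
        (W.op (V.lOneDPow q v) (l + (2 * k - 2 - l - q - n) - i)
            (W.op (V.lOneDPow p u) (2 * h - 2 - l - p - m + i) w)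
          - (-1 : ℂ) ^ l • W.op (V.lOneDPow p u) (l + (2 * h - 2 - l - p - m) - i)
              (W.op (V.lOneDPow q v) (2 * k - 2 - l - q - n + i) w)) := by
  rw [adjointMode_adjointMode_apply hv hu hv_K hu_K, adjointMode_adjointMode_apply hu hv hu_K hv_K,
    smul_comm, add_comm k h, ← smul_sub, sum_comm (s := range K) (t := range K)
      (f := fun p q => W.op (V.lOneDPow p u) _ _), smul_sum, ← sum_sub_distrib]
  refine congrArg _ (sum_congr rfl fun q _ => ?_)
  rw [smul_sum, ← sum_sub_distrib]
  refine sum_congr rfl fun p _ => ?_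
  ring_nf

-- For fixed `p` and `q` the sum over `i` is one side of the Borcherds identity of `W`, with `m` and
-- `n` replaced by `2h - 2 - l - p - m` and `2k - 2 - l - q - n`.
lemma finsum_adjointMode_adjointMode (hu : u ∈ V.wtSpace h) (hv : v ∈ V.wtSpace k)
    (hK : ∀ i : ℕ, K ≤ i → V.wtSpace (h + k - l - 1 - i) = ⊥)
    (hu_K : ∀ p, K ≤ p → V.lOneDPow p u = 0) (hv_K : ∀ q, K ≤ q → V.lOneDPow q v = 0)
    (m n : ℤ) (w : W.carrier) :
    ∑ᶠ i : ℕ, ((-1 : ℂ) ^ i * cchoose l i) •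
        (W.adjointMode (n + i) v (W.adjointMode (l + m - i) u w)
          - (-1 : ℂ) ^ l • W.adjointMode (m + i) u (W.adjointMode (l + n - i) v w))
      = (-1 : ℂ) ^ (h + k - l - 1) •
        ∑ q ∈ range K, ∑ p ∈ range K, ∑ t ∈ range K, cchoose (2 * h - 2 - l - p - m) t •
          W.op (V.op (V.lOneDPow p u) (l + t) (V.lOneDPow q v))
            (2 * (h + k - l - 1) - (m + n) - (p + q + t : ℕ) - 2) w := by
  let F (q p i : ℕ) : W.carrier := ((-1 : ℂ) ^ i * cchoose l i) •
    (W.op (V.lOneDPow q v) (l + (2 * k - 2 - l - q - n) - i)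
        (W.op (V.lOneDPow p u) (2 * h - 2 - l - p - m + i) w)
      - (-1 : ℂ) ^ l • W.op (V.lOneDPow p u) (l + (2 * h - 2 - l - p - m) - i)
          (W.op (V.lOneDPow q v) (2 * k - 2 - l - q - n + i) w))
  have F_finite (q p : ℕ) : (F q p).support.Finite :=
    finite_support_smul_map_sub_map
      ((tendsto_const_add_natCast_atTop _).eventually (eventually_op_eq_zero _ w))
      ((tendsto_const_add_natCast_atTop _).eventually (eventually_op_eq_zero _ w))
      (fun _ => W.mode _ _) (fun _ => W.mode _ _) _ _
  have op_op_eq_zero (p q i : ℕ) (hi : K ≤ i) :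
      V.op (V.lOneDPow p u) (l + i) (V.lOneDPow q v) = 0 :=
    VOA.op_lOneDPow_eq_zero hu hv (hK _ (by omega))
  have sign : (-1 : ℂ) ^ (h + k) * -(-1 : ℂ) ^ l = (-1 : ℂ) ^ (h + k - l - 1) := by
    rw [zpow_sub_one₀ (by norm_num), zpow_sub₀ (by norm_num), div_eq_mul_inv, ← inv_zpow,
      inv_neg_one]
    ring
  calc
    _ = ∑ᶠ i, (-1 : ℂ) ^ (h + k) • ∑ q ∈ range K, ∑ p ∈ range K, F q p i := by
      simp only [adjointMode_commutator_apply hu hv hu_K hv_K, F, smul_comm _ ((-1 : ℂ) ^ (h + k)),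
        smul_sum]
    _ = (-1 : ℂ) ^ (h + k) • ∑ q ∈ range K, ∑ p ∈ range K, ∑ᶠ i, F q p i := by
      rw [← smul_finsum, finsum_sum_sum_comm F_finite]
    _ = _ := by
      rw [← sign, mul_smul, smul_sum (r := -(-1 : ℂ) ^ l)]
      refine congrArg _ (sum_congr rfl fun q _ => ?_)
      rw [smul_sum]
      refine sum_congr rfl fun p _ => ?_
      rw [finsum_op_op, finsum_eq_sum_range fun i hi => by
        rw [op_op_eq_zero p q i hi, (W.op_linear_left _ w).map_zero, smul_zero]]
      refine congrArg _ (sum_congr rfl fun t _ => ?_)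
      push_cast
      ring_nf

lemma finite_support_adjointMode_op (u v : V.carrier) (w : W.carrier) (l m n : ℤ) :
    (fun i : ℕ =>
      cchoose m i • W.adjointMode (m + n - i) (V.op u (l + i) v) w).support.Finite :=
  VOA.finite_support_map_op u v l fun i =>
    cchoose m i • (LinearMap.applyₗ w ∘ₗ W.adjointMode (m + n - i))

lemma finite_support_adjointMode_adjointMode (u v : V.carrier) (w : W.carrier) (l m n : ℤ) :
    (fun i : ℕ => ((-1 : ℂ) ^ i * cchoose l i) •
      (W.adjointMode (n + i) v (W.adjointMode (l + m - i) u w)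
        - (-1 : ℂ) ^ l • W.adjointMode (m + i) u
          (W.adjointMode (l + n - i) v w))).support.Finite :=
  finite_support_smul_map_sub_map
    ((tendsto_const_sub_natCast_atBot _).eventually (eventually_adjointMode_apply_eq_zero u w))
    ((tendsto_const_sub_natCast_atBot _).eventually (eventually_adjointMode_apply_eq_zero v w))
    (fun _ => W.adjointMode _ _) (fun _ => W.adjointMode _ _) _ _

theorem adjointMode_borcherds (u v : V.carrier) (w : W.carrier) (l m n : ℤ) :
    ∑ᶠ i : ℕ, cchoose m i • W.adjointMode (m + n - i) (V.op u (l + i) v) w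
      = ∑ᶠ i : ℕ, ((-1 : ℂ) ^ i * cchoose l i) •
        (W.adjointMode (n + i) v (W.adjointMode (l + m - i) u w)
          - (-1 : ℂ) ^ l • W.adjointMode (m + i) u (W.adjointMode (l + n - i) v w)) := by
  let F (u v : V.carrier) (i : ℕ) : W.carrier :=
    cchoose m i • W.adjointMode (m + n - i) (V.op u (l + i) v) w
  let G (u v : V.carrier) (i : ℕ) : W.carrier := ((-1 : ℂ) ^ i * cchoose l i) •
    (W.adjointMode (n + i) v (W.adjointMode (l + m - i) u w)
      - (-1 : ℂ) ^ l • W.adjointMode (m + i) u (W.adjointMode (l + n - i) v w))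
  have F_add_left (u u' v : V.carrier) : F (u + u') v = F u v + F u' v := by
    funext i
    simp [F, ← VOA.mode_apply]
  have F_add_right (u v v' : V.carrier) : F u (v + v') = F u v + F u v' := by
    funext i
    simp [F, ← VOA.mode_apply]
  have G_add_left (u u' v : V.carrier) : G (u + u') v = G u v + G u' v := by
    funext i
    simp only [G, map_add, LinearMap.add_apply, Pi.add_apply]
    module
  have G_add_right (u v v' : V.carrier) : G u (v + v') = G u v + G u v' := by
    funext i
    simp only [G, map_add, LinearMap.add_apply, Pi.add_apply]
    module
  have F_finite (u v : V.carrier) : (F u v).support.Finite :=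
    finite_support_adjointMode_op u v w l m n
  have G_finite (u v : V.carrier) : (G u v).support.Finite :=
    finite_support_adjointMode_adjointMode u v w l m n
  refine VOA.finsum_eq_finsum_of_homogeneous (F := fun u => F u v) (G := fun u => G u v)
    (F_add_left · · v) (G_add_left · · v) (F_finite · v) (G_finite · v) (fun h u hu => ?_) u
  refine VOA.finsum_eq_finsum_of_homogeneous (F_add_right u) (G_add_right u) (F_finite u)
    (G_finite u) (fun k v hv => ?_) v
  obtain ⟨K, hK⟩ := eventually_atTop.1 <| (V.eventually_wtSpace_sub_eq_bot (h + k - l - 1)).and <|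
    (VOA.eventually_lOneDPow_eq_zero u).and (VOA.eventually_lOneDPow_eq_zero v)
  rw [finsum_adjointMode_op hu hv fun i hi => (hK i hi).1,
    finsum_adjointMode_adjointMode hu hv (fun i hi => (hK i hi).1) (fun i hi => (hK i hi).2.1)
      fun i hi => (hK i hi).2.2]

end Borcherds

variable (W) in
/-- `D(W)` as a subspace of the dual of `W`, defined through the transposes of the operators
`adjointMode`. -/
def truncatedDual : Submodule ℂ (Module.Dual ℂ W.carrier) where
  carrier := {α | ∀ v : V.carrier, ∀ᶠ n in atTop, α ∘ₗ W.adjointMode n v = 0}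
  zero_mem' v := Eventually.of_forall fun n => LinearMap.zero_comp _
  add_mem' {α β} hα hβ v := by
    filter_upwards [hα v, hβ v] with n hα hβ
    rw [LinearMap.add_comp, hα, hβ, add_zero]
  smul_mem' c α hα v := by
    filter_upwards [hα v] with n hα
    rw [LinearMap.smul_comp, hα, smul_zero]

lemma coe_mem_DW {α : Module.Dual ℂ W.carrier} : ⇑α ∈ W.DW ↔ α ∈ W.truncatedDual := by
  refine ⟨fun h v => eventually_atTop.2 <| (h.2 v).imp fun N hN n hn => ?_,
    fun h => ⟨α.isLinear, fun v => (eventually_atTop.1 (h v)).imp fun N hN n hn w => ?_⟩⟩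
  · ext w
    rw [LinearMap.comp_apply, ← dmode_eq_adjointMode, hN n hn w, LinearMap.zero_apply]
  · rw [dmode_eq_adjointMode, ← LinearMap.comp_apply, hN n hn, LinearMap.zero_apply]

lemma adjointMode_commutator (u v : V.carrier) (w : W.carrier) (m n : ℤ) :
    ∑ᶠ i : ℕ, cchoose m i • W.adjointMode (m + n - i) (V.op u i v) w
      = W.adjointMode n v (W.adjointMode m u w) - W.adjointMode m u (W.adjointMode n v w) := by
  have borcherds := adjointMode_borcherds u v w 0 m n
  rw [finsum_eq_single (fun i : ℕ => ((-1 : ℂ) ^ i * cchoose 0 i) • _) 0 fun i hi => by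
    rw [cchoose_zero_left hi, mul_zero, zero_smul]] at borcherds
  simpa using borcherds

lemma comp_adjointMode_mem_truncatedDual {α : Module.Dual ℂ W.carrier} (hα : α ∈ W.truncatedDual)
    (n : ℤ) (v : V.carrier) : α ∘ₗ W.adjointMode n v ∈ W.truncatedDual := by
  intro u
  obtain ⟨K, hK⟩ := eventually_atTop.1 <|
    tendsto_natCast_atTop_atTop.eventually (VOA.eventually_op_eq_zero u v)
  have op_truncated (i : ℕ) : ∀ᶠ m in atTop, α ∘ₗ W.adjointMode (m + n - i) (V.op u i v) = 0 := by
    have shift := tendsto_atTop_add_const_right atTop (n - i) (tendsto_id (α := ℤ))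
    simpa [add_sub_assoc] using shift.eventually (hα (V.op u i v))
  filter_upwards [hα u, (eventually_all_finset (range K)).2 fun i _ => op_truncated i]
    with m u_truncated op_truncated
  ext w
  have commutator := adjointMode_commutator u v w m n
  rw [finsum_eq_sum_range fun i hi => by rw [hK i hi, map_zero, LinearMap.zero_apply, smul_zero],
    eq_sub_iff_add_eq] at commutator
  rw [LinearMap.comp_apply, LinearMap.comp_apply, ← commutator, map_add, map_sum,
    ← LinearMap.comp_apply α (W.adjointMode m u), u_truncated, LinearMap.zero_apply, add_zero]
  refine sum_eq_zero fun i hi => ?_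
  rw [map_smul, ← LinearMap.comp_apply, op_truncated i hi, LinearMap.zero_apply, smul_zero]

variable (W) in
/-- The mode `v ↦ v*ₙ` acting on `D(W)`. -/
def truncatedDualMode (n : ℤ) : V.carrier →ₗ[ℂ] Module.End ℂ W.truncatedDual :=
  LinearMap.mk₂ ℂ
    (fun v α => ⟨α.1 ∘ₗ W.adjointMode n v, comp_adjointMode_mem_truncatedDual α.2 n v⟩)
    (fun u v α => Subtype.ext <| by simp [LinearMap.comp_add])
    (fun c v α => Subtype.ext <| by simp [LinearMap.comp_smul])
    (fun v α β => rfl) (fun c v α => rfl)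

lemma truncatedDualMode_apply (n : ℤ) (v : V.carrier) (α : W.truncatedDual) (w : W.carrier) :
    (W.truncatedDualMode n v α).1 w = α.1 (W.adjointMode n v w) := rfl

lemma eventually_truncatedDualMode_apply_eq_zero (v : V.carrier) (α : W.truncatedDual) :
    ∀ᶠ n in atTop, W.truncatedDualMode n v α = 0 :=
  (α.2 v).mono fun _ hn => Subtype.ext hn

theorem truncatedDualMode_borcherds (u v : V.carrier) (α : W.truncatedDual) (l m n : ℤ) :
    ∑ᶠ i : ℕ, cchoose m i • W.truncatedDualMode (m + n - i) (V.op u (l + i) v) α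
      = ∑ᶠ i : ℕ, ((-1 : ℂ) ^ i * cchoose l i) •
        (W.truncatedDualMode (l + m - i) u (W.truncatedDualMode (n + i) v α)
          - (-1 : ℂ) ^ l •
            W.truncatedDualMode (l + n - i) v (W.truncatedDualMode (m + i) u α)) := by
  refine Subtype.ext (LinearMap.ext fun w => ?_)
  let eval : W.truncatedDual →ₗ[ℂ] ℂ := LinearMap.applyₗ w ∘ₗ W.truncatedDual.subtype
  have finite_left := VOA.finite_support_map_op u v l fun i =>
    cchoose m i • (LinearMap.applyₗ α ∘ₗ W.truncatedDualMode (m + n - i))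
  have finite_right := finite_support_smul_map_sub_map
    ((tendsto_const_add_natCast_atTop n).eventually
      (eventually_truncatedDualMode_apply_eq_zero v α))
    ((tendsto_const_add_natCast_atTop m).eventually
      (eventually_truncatedDualMode_apply_eq_zero u α))
    (fun i => W.truncatedDualMode (l + m - i) u) (fun i => W.truncatedDualMode (l + n - i) v)
    (fun i => (-1 : ℂ) ^ i * cchoose l i) ((-1 : ℂ) ^ l)
  have borcherds := congrArg α.1 (adjointMode_borcherds u v w l m n)
  have map_left := α.1.toAddMonoidHom.map_finsum (finite_support_adjointMode_op u v w l m n)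
  have map_right := α.1.toAddMonoidHom.map_finsum
    (finite_support_adjointMode_adjointMode u v w l m n)
  refine (eval.toAddMonoidHom.map_finsum finite_left).trans <|
    Eq.trans ?_ (eval.toAddMonoidHom.map_finsum finite_right).symm
  simpa [eval, truncatedDualMode_apply] using map_left.symm.trans (borcherds.trans map_right)

variable (W) in
/-- The weak module structure on `D(W)` given by the adjoint vertex operator `Y*`. -/
def truncatedDualModule : WeakModule V where
  carrier := W.truncatedDual
  op v n α := W.truncatedDualMode n v α
  op_linear_left n α := (LinearMap.applyₗ α ∘ₗ W.truncatedDualMode n).isLinear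
  op_linear_right v n := (W.truncatedDualMode n v).isLinear
  trunc v α := eventually_atTop.1 (eventually_truncatedDualMode_apply_eq_zero v α)
  one_op n α := Subtype.ext <| LinearMap.ext fun w => by
    rw [truncatedDualMode_apply, adjointMode_one]
    split_ifs <;> simp
  borcherds := truncatedDualMode_borcherds

lemma apply_L0_of_mem_eig_truncatedDualModule {g : ℂ} {α : W.truncatedDual}
    (hα : α ∈ W.truncatedDualModule.eig g) (w : W.carrier) : α.1 (W.L0 w) = g * α.1 w := by
  have eigenvector : W.truncatedDualMode 1 V.omega α - g • α = 0 := hα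
  rw [← adjointMode_omega, ← truncatedDualMode_apply, sub_eq_zero.1 eigenvector]
  rfl

end WeakModule

namespace GenModule

variable {V : VOA} {W : GenModule V}

lemma linearMap_eq_zero {M : Type*} [AddCommGroup M] [Module ℂ M] {f : W.carrier →ₗ[ℂ] M}
    (hf : ∀ g, ∀ w ∈ W.wt g, f w = 0) : f = 0 := by
  ext w
  rw [← W.projW_sum w]
  exact finsum_induction (f · = 0) (map_zero f) (fun x y hx hy => by rw [map_add, hx, hy, add_zero])
    fun g => hf g _ (W.projW_mem g w)

variable (W) in
/-- The restricted dual `W'` as a subspace of the dual of `W`. -/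
def restrictedDualSubmodule : Submodule ℂ (Module.Dual ℂ W.carrier) where
  carrier := {α | {h | ∃ w ∈ W.wt h, α w ≠ 0}.Finite}
  zero_mem' := by simp
  add_mem' {α β} hα hβ := by
    refine (hα.union hβ).subset fun h ⟨w, hw, hne⟩ => ?_
    by_cases hzero : α w = 0
    · exact Or.inr ⟨w, hw, fun hβw => hne (by rw [LinearMap.add_apply, hzero, hβw, add_zero])⟩
    · exact Or.inl ⟨w, hw, hzero⟩
  smul_mem' c α hα := hα.subset fun h ⟨w, hw, hne⟩ =>
    ⟨w, hw, fun hzero => hne (by rw [LinearMap.smul_apply, hzero, smul_zero])⟩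

lemma mem_restrictedDualSubmodule {α : Module.Dual ℂ W.carrier} :
    α ∈ W.restrictedDualSubmodule ↔ {h | ∃ w ∈ W.wt h, α w ≠ 0}.Finite := Iff.rfl

lemma coe_mem_restrictedDual {α : Module.Dual ℂ W.carrier} :
    ⇑α ∈ W.restrictedDual ↔ α ∈ W.restrictedDualSubmodule :=
  ⟨fun h => h.2, fun h => ⟨α.isLinear, h⟩⟩

lemma truncatedDual_le_restrictedDualSubmodule
    (hW : ⨆ g, W.toWeakModule.truncatedDualModule.eig g = ⊤) :
    W.toWeakModule.truncatedDual ≤ W.restrictedDualSubmodule := by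
  have eig_le (g : ℂ) : W.toWeakModule.truncatedDualModule.eig g ≤
      W.restrictedDualSubmodule.comap W.toWeakModule.truncatedDual.subtype := by
    intro α hα
    refine mem_restrictedDualSubmodule.2 <| (Set.finite_singleton g).subset fun h ⟨w, hw, hne⟩ => ?_
    have eigenvalue := WeakModule.apply_L0_of_mem_eig_truncatedDualModule hα w
    have L0_apply : W.toWeakModule.L0 w = h • w := W.wt_L0 h w hw
    rw [L0_apply, map_smul, smul_eq_mul] at eigenvalue
    exact mul_right_cancel₀ hne eigenvalue
  exact fun α hα => hW.ge.trans (iSup_le eig_le) (Submodule.mem_top (x := ⟨α, hα⟩))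

lemma adjointMode_mem_wt {h : ℤ} {v : V.carrier} (hv : v ∈ V.wtSpace h) (n : ℤ) {g : ℂ}
    {w : W.carrier} (hw : w ∈ W.wt g) :
    W.toWeakModule.adjointMode n v w ∈ W.wt (g + ((n + 1 - h : ℤ) : ℂ)) := by
  obtain ⟨K, hK⟩ := eventually_atTop.1 (VOA.eventually_lOneDPow_eq_zero v)
  rw [WeakModule.adjointMode_apply_of_mem hv hK]
  refine Submodule.smul_mem _ _ (Submodule.sum_mem _ fun p _ => ?_)
  convert W.wt_op _ _ (VOA.lOneDPow_mem hv p) g _ w hw using 2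
  push_cast
  ring

lemma restrictedDualSubmodule_le_truncatedDual
    (hW : ∀ h : ℂ, ∀ᶠ m : ℤ in atBot, W.wt (h + m) = ⊥) :
    W.restrictedDualSubmodule ≤ W.toWeakModule.truncatedDual := by
  intro α hα v
  refine VOA.homogeneous_induction
    (p := fun v => ∀ᶠ n in atTop, α ∘ₗ W.toWeakModule.adjointMode n v = 0)
    (fun u v hu hv => ?_) (fun h v hv => ?_) v
  · filter_upwards [hu, hv] with n hu hv
    rw [map_add, LinearMap.comp_add, hu, hv, add_zero]
  have weights_truncated :=
    (Set.Finite.eventually_all (mem_restrictedDualSubmodule.1 hα)).2 fun g _ => hW g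
  have shift : Tendsto (fun n : ℤ => h - 1 - n) atTop atBot := by
    simpa [sub_eq_add_neg] using
      tendsto_atBot_add_const_left atTop (h - 1) tendsto_neg_atTop_atBot
  filter_upwards [shift.eventually weights_truncated] with n hn
  refine linearMap_eq_zero fun g w hw => ?_
  by_contra hne
  have wt_eq_bot := hn _ ⟨_, adjointMode_mem_wt hv n hw, hne⟩
  have cancel : g + ((n + 1 - h : ℤ) : ℂ) + ((h - 1 - n : ℤ) : ℂ) = g := by
    push_cast
    ring
  rw [cancel] at wt_eq_bot
  rw [wt_eq_bot, Submodule.mem_bot] at hw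
  exact hne (by rw [hw, map_zero])

end GenModule

lemma VOA.regular.classA {V : VOA} (hV : V.regular) : V.classA := by
  intro M
  obtain ⟨ι, S, hS, -, S_top⟩ := hV M
  exact top_le_iff.1 <| S_top ▸ iSup_le fun i => (hS i).2.1.trans (iSup_mono fun h => inf_le_left)

theorem DW_eq_restricted_dual_of_regular_general (V : VOA) (hV : V.classA) (W : GenModule V)
    (hW : ∀ h : ℂ, ∃ N : ℤ, ∀ m : ℤ, m ≤ N → W.wt (h + (m : ℂ)) = ⊥) :
    W.toWeakModule.DW = W.restrictedDual := by
  have dual_eq : W.toWeakModule.truncatedDual = W.restrictedDualSubmodule :=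
    le_antisymm (W.truncatedDual_le_restrictedDualSubmodule (hV _))
      (W.restrictedDualSubmodule_le_truncatedDual fun h => eventually_atBot.2 (hW h))
  have coe_mem_iff (α : Module.Dual ℂ W.carrier) :
      ⇑α ∈ W.toWeakModule.DW ↔ ⇑α ∈ W.restrictedDual := by
    rw [WeakModule.coe_mem_DW, dual_eq, GenModule.coe_mem_restrictedDual]
  ext α
  exact ⟨fun h => (coe_mem_iff (h.1.mk' α)).1 h, fun h => (coe_mem_iff (h.1.mk' α)).2 h⟩

end

/-- If `V` is a regular vertex operator algebra (every weak
`V`-module is a direct sum of irreducible ordinary `V`-modules), then for any ordinary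
`V`-module `W` one has `D(W) = W'`. -/
theorem DW_eq_restricted_dual_of_regular (V : VOA) (hV : V.regular) (W : OrdModule V) :
    W.toGenModule.toWeakModule.DW = W.toGenModule.restrictedDual :=
  DW_eq_restricted_dual_of_regular_general V hV.classA W.toGenModule W.wt_lower
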